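/- For every natural number N ≥ 1 and |q|<1: (1/(q;q)_N) ∑_{n=1}^{N} [N choose n] (-1)^{n-1} n q^{n(n+1)/2}/(1-q^n) + ∑_{n=1}^{N} [N choose n] (q^{n^2}/(q;q)_n) ∑_{k=1}^{n} q^k/(1-q^k)^2 = (1/(q;q)_N) ∑_{n=1}^{∞} n q^n (1-q^{Nn})/(1-q^n). (Finite analogue of Andrews' spt identity, generating-function form.) -/

import Mathlib

open Finset

/-- q-Pochhammer symbol (a;q)_n = ∏_{k=0}^{n-1} (1 - a q^k). -/
noncomputable def qP (a q : ℂ) (n : ℕ) : ℂ := ∏ k ∈ Finset.range n, (1 - a * q ^ k)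

/-- Gaussian (q-)binomial coefficient [N choose n]_q. -/
noncomputable def qBinom (q : ℂ) (N n : ℕ) : ℂ := qP q q N / (qP q q n * qP q q (N - n))

/-!
Multiply the identity by `(q;q)_N`. Expanding `1 - q ^ (N n)` over `1 - q ^ n` as a geometric sum
turns the series on the right into `∑_{k ≤ N} q ^ k / (1 - q ^ k) ^ 2`. Both sums on the left are
evaluated by induction on `N`. Passing to `N + 1` increases the alternating sum by
`(q;q)_{N+1} q ^ (N+1) / (1 - q ^ (N+1)) ^ 2`, by the derivative at `x = 1` of the finite
`q`-binomial theorem. The numbers `(q;q)_N [N choose n] q ^ (n ^ 2) / (q;q)_n` sum to `1` over `n`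
(Durfee squares), and their increments in `N` telescope in `n`; summation by parts then shows that
the second sum increases by `(1 - (q;q)_{N+1}) q ^ (N+1) / (1 - q ^ (N+1)) ^ 2`.
-/

/-- The `q`-Pochhammer symbol `(a;q)_n` in an arbitrary commutative ring; over `ℂ` it is `qP`. -/
def qPochhammer {R : Type*} [CommRing R] (a q : R) (n : ℕ) : R := ∏ k ∈ range n, (1 - a * q ^ k)

/-- The Gaussian binomial coefficient `[N choose n]_q`, defined by the `q`-Pascal rule so that it
makes sense in every semiring and vanishes for `N < n`; see
`gaussBinom_mul_qPochhammer_mul_qPochhammer` for the quotient formula. -/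
def gaussBinom {R : Type*} [Semiring R] (q : R) : ℕ → ℕ → R
  | _, 0 => 1
  | 0, _ + 1 => 0
  | N + 1, n + 1 => gaussBinom q N n + q ^ (n + 1) * gaussBinom q N (n + 1)

lemma sum_range_succ_eq_sum_Icc_one {M : Type*} [AddCommMonoid M] {f : ℕ → M} (hf : f 0 = 0)
    (N : ℕ) :
    ∑ n ∈ range (N + 1), f n = ∑ n ∈ Icc 1 N, f n := by
  rw [sum_range_succ', hf, add_zero, range_eq_Ico, sum_Ico_add' f 0 N 1]
  rfl

lemma succ_choose_two (n : ℕ) : (n + 1).choose 2 = n + n.choose 2 := by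
  rw [Nat.choose_succ_succ' n 1, Nat.choose_one_right]

lemma sum_Icc_one_pow {K : Type*} [Field K] {x : K} (hx : x ≠ 1) (N : ℕ) :
    ∑ k ∈ Icc 1 N, x ^ k = x * (1 - x ^ N) / (1 - x) := by
  rw [← Ico_add_one_right_eq_Icc, geom_sum_Ico' hx (Nat.le_add_left 1 N), pow_succ']
  ring

lemma one_sub_pow_succ_ne_zero {R : Type*} [Ring R] {q : R} (hq : ¬IsOfFinOrder q) (n : ℕ) :
    1 - q ^ (n + 1) ≠ 0 := fun h =>
  hq <| isOfFinOrder_iff_pow_eq_one.mpr ⟨n + 1, n.succ_pos, (sub_eq_zero.mp h).symm⟩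

lemma not_isOfFinOrder_of_norm_lt_one {R : Type*} [NormedRing R] [NormMulClass R]
    [NormOneClass R] {q : R} (hq : ‖q‖ < 1) : ¬IsOfFinOrder q := fun h =>
  hq.ne h.norm_eq_one

section Semiring

variable {R : Type*} [Semiring R]

@[simp]
lemma gaussBinom_zero_right (q : R) (N : ℕ) : gaussBinom q N 0 = 1 := by
  cases N <;> rfl

lemma gaussBinom_succ_succ (q : R) (N n : ℕ) :
    gaussBinom q (N + 1) (n + 1) = gaussBinom q N n + q ^ (n + 1) * gaussBinom q N (n + 1) :=
  rfl

lemma gaussBinom_eq_zero_of_lt (q : R) {N n : ℕ} (h : N < n) : gaussBinom q N n = 0 := by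
  induction N generalizing n with
  | zero => obtain ⟨n, rfl⟩ := Nat.exists_eq_add_of_lt h; simp [gaussBinom]
  | succ N ih =>
    obtain ⟨n, rfl⟩ := Nat.exists_eq_succ_of_ne_zero (Nat.ne_zero_of_lt h)
    rw [gaussBinom_succ_succ, ih (by lia), ih (by lia), mul_zero, add_zero]

lemma map_gaussBinom {S : Type*} [Semiring S] (φ : R →+* S) (q : R) (N n : ℕ) :
    φ (gaussBinom q N n) = gaussBinom (φ q) N n := by
  induction N generalizing n with
  | zero => cases n <;> simp [gaussBinom]
  | succ N ih => cases n <;> simp [gaussBinom_succ_succ, ih]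

lemma sum_range_gaussBinom_mul_extend (q : R) (f : ℕ → R) (N : ℕ) :
    ∑ n ∈ range (N + 2), gaussBinom q N n * f n =
      ∑ n ∈ range (N + 1), gaussBinom q N n * f n := by
  rw [sum_range_succ _ (N + 1), gaussBinom_eq_zero_of_lt q N.lt_succ_self, zero_mul, add_zero]

end Semiring

section CommRing

variable {R : Type*} [CommRing R]

@[simp]
lemma qPochhammer_zero (a q : R) : qPochhammer a q 0 = 1 := prod_range_zero _

lemma qPochhammer_succ' (a q : R) (n : ℕ) :
    qPochhammer a q (n + 1) = (1 - a) * qPochhammer (a * q) q n := by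
  simp only [qPochhammer, prod_range_succ', pow_zero, mul_one, mul_assoc, ← pow_succ']
  exact mul_comm _ _

lemma qPochhammer_self_succ (q : R) (n : ℕ) :
    qPochhammer q q (n + 1) = qPochhammer q q n * (1 - q ^ (n + 1)) := by
  rw [qPochhammer, prod_range_succ, ← pow_succ', qPochhammer]

lemma map_qPochhammer {S : Type*} [CommRing S] (φ : R →+* S) (a q : R) (n : ℕ) :
    φ (qPochhammer a q n) = qPochhammer (φ a) (φ q) n := by
  simp [qPochhammer]

lemma one_sub_pow_mul_gaussBinom_add_succ (q : R) (n m : ℕ) :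
    (1 - q ^ (n + 1)) * gaussBinom q (n + m) (n + 1) = (1 - q ^ m) * gaussBinom q (n + m) n := by
  induction n generalizing m with
  | zero =>
    induction m with
    | zero => simp [gaussBinom]
    | succ m ih =>
      simp only [zero_add, gaussBinom_zero_right, gaussBinom_succ_succ] at ih ⊢
      linear_combination q * ih
  | succ n ihn =>
    induction m with
    | zero => simp [gaussBinom_eq_zero_of_lt]
    | succ m ihm =>
      have hn := ihn (m + 1)
      rw [show n + 1 + m = n + (m + 1) by ring] at ihm
      rw [show n + 1 + (m + 1) = n + (m + 1) + 1 by ring, gaussBinom_succ_succ,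
        gaussBinom_succ_succ]
      linear_combination q ^ (n + 2) * ihm + hn

lemma one_sub_pow_mul_gaussBinom_succ_succ (q : R) (N n : ℕ) :
    (1 - q ^ (n + 1)) * gaussBinom q (N + 1) (n + 1) =
      (1 - q ^ (N + 1)) * gaussBinom q N n := by
  rcases lt_or_ge N n with hlt | hle
  · rw [gaussBinom_eq_zero_of_lt q hlt, gaussBinom_eq_zero_of_lt q (Nat.succ_lt_succ hlt),
      mul_zero, mul_zero]
  obtain ⟨m, rfl⟩ := Nat.exists_eq_add_of_le hle
  rw [gaussBinom_succ_succ]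
  linear_combination q ^ (n + 1) * one_sub_pow_mul_gaussBinom_add_succ q n m

lemma gaussBinom_mul_qPochhammer_mul_qPochhammer (q : R) (n m : ℕ) :
    gaussBinom q (n + m) n * qPochhammer q q n * qPochhammer q q m =
      qPochhammer q q (n + m) := by
  induction n with
  | zero => simp
  | succ n ih =>
    have hratio := one_sub_pow_mul_gaussBinom_succ_succ q (n + m) n
    rw [Nat.add_right_comm, qPochhammer_self_succ, qPochhammer_self_succ]
    linear_combination
      qPochhammer q q n * qPochhammer q q m * hratio + (1 - q ^ (n + m + 1)) * ih

lemma qPochhammer_self_ne_zero [IsDomain R] {q : R} (hq : ¬IsOfFinOrder q) (n : ℕ) :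
    qPochhammer q q n ≠ 0 := by
  refine prod_ne_zero_iff.mpr fun k _ => ?_
  rw [← pow_succ']
  exact one_sub_pow_succ_ne_zero hq k

/-- The finite `q`-binomial theorem (Rothe's identity). -/
theorem qPochhammer_eq_sum_gaussBinom (x q : R) (N : ℕ) :
    qPochhammer x q N =
      ∑ n ∈ range (N + 1), gaussBinom q N n * ((-1) ^ n * q ^ n.choose 2 * x ^ n) := by
  induction N generalizing x with
  | zero => simp
  | succ N ih =>
    have hhead : qPochhammer (x * q) q N =
        ∑ n ∈ range (N + 1), gaussBinom q N (n + 1) *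
          ((-1) ^ (n + 1) * q ^ (n + 1).choose 2 * (x * q) ^ (n + 1)) + 1 := by
      rw [ih, ← sum_range_gaussBinom_mul_extend, sum_range_succ']
      simp
    rw [qPochhammer_succ', sub_mul, one_mul, sum_range_succ']
    nth_rw 2 [ih]
    rw [hhead, mul_sum, add_sub_right_comm, ← sum_sub_distrib]
    congr 1
    · refine sum_congr rfl fun n _ => ?_
      rw [gaussBinom_succ_succ, succ_choose_two]
      ring
    · simp

open Polynomial in
/-- The derivative at `x = 1` of the finite `q`-binomial theorem. -/
lemma sum_Icc_gaussBinom_mul_neg_one_pow_mul (q : R) (N : ℕ) :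
    ∑ n ∈ Icc 1 (N + 1), gaussBinom q (N + 1) n * ((-1) ^ (n - 1) * n * q ^ n.choose 2) =
      qPochhammer q q N := by
  have hleft : (derivative (qPochhammer (X : R[X]) (C q) (N + 1))).eval 1 =
      -qPochhammer q q N := by
    have heval : (qPochhammer (X * C q) (C q) N).eval 1 = qPochhammer q q N := by
      rw [← coe_evalRingHom, map_qPochhammer]
      simp
    rw [qPochhammer_succ', derivative_mul, eval_add, eval_mul, heval]
    simp
  have hright : (derivative (qPochhammer (X : R[X]) (C q) (N + 1))).eval 1 =
      ∑ n ∈ range (N + 2),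
        gaussBinom q (N + 1) n * ((-1) ^ n * q ^ n.choose 2 * n) := by
    rw [qPochhammer_eq_sum_gaussBinom, derivative_sum, eval_finsetSum]
    refine sum_congr rfl fun n _ => ?_
    rw [← map_gaussBinom, show (-1 : R[X]) = C (-1) by simp, ← C_pow, ← C_pow, ← C_mul,
      derivative_C_mul, derivative_C_mul, derivative_X_pow]
    simp
  rw [← neg_eq_iff_eq_neg.mpr hleft, hright, sum_range_succ_eq_sum_Icc_one (by simp),
    ← sum_neg_distrib]
  refine sum_congr rfl fun n hn => ?_
  obtain ⟨k, rfl⟩ := Nat.exists_eq_add_of_le' (mem_Icc.mp hn).1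
  rw [Nat.add_sub_cancel]
  ring

end CommRing

section Field

variable {K : Type*} [Field K] {q : K}

lemma gaussBinom_succ_succ_eq_div (hq : ¬IsOfFinOrder q) (N n : ℕ) :
    gaussBinom q (N + 1) (n + 1) =
      (1 - q ^ (N + 1)) * gaussBinom q N n / (1 - q ^ (n + 1)) := by
  rw [eq_div_iff (one_sub_pow_succ_ne_zero hq n), mul_comm,
    one_sub_pow_mul_gaussBinom_succ_succ]

lemma gaussBinom_add_succ_eq_div (hq : ¬IsOfFinOrder q) (n m : ℕ) :
    gaussBinom q (n + m) (n + 1) =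
      (1 - q ^ m) * gaussBinom q (n + m) n / (1 - q ^ (n + 1)) := by
  rw [eq_div_iff (one_sub_pow_succ_ne_zero hq n), mul_comm,
    one_sub_pow_mul_gaussBinom_add_succ]

/-- The alternating sum in the finite spt identity, with exponent `n (n + 1) / 2` written as a
binomial coefficient. -/
def alternatingSum (q : K) (N : ℕ) : K :=
  ∑ n ∈ Icc 1 N,
    gaussBinom q N n * ((-1) ^ (n - 1) * n * q ^ (n + 1).choose 2 / (1 - q ^ n))

lemma alternatingSum_succ (hq : ¬IsOfFinOrder q) (N : ℕ) :
    alternatingSum q (N + 1) =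
      alternatingSum q N + q ^ (N + 1) / (1 - q ^ (N + 1)) * qPochhammer q q N := by
  have hextend : alternatingSum q N = ∑ n ∈ Icc 1 (N + 1),
      gaussBinom q N n * ((-1) ^ (n - 1) * n * q ^ (n + 1).choose 2 / (1 - q ^ n)) := by
    rw [sum_Icc_succ_top (by lia), gaussBinom_eq_zero_of_lt q N.lt_succ_self, zero_mul, add_zero,
      alternatingSum]
  rw [hextend, alternatingSum, ← sum_Icc_gaussBinom_mul_neg_one_pow_mul, mul_sum,
    ← sum_add_distrib]
  refine sum_congr rfl fun n hn => ?_
  obtain ⟨hpos, hle⟩ := mem_Icc.mp hn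
  obtain ⟨n, rfl⟩ := Nat.exists_eq_add_of_le' hpos
  obtain ⟨m, rfl⟩ := Nat.exists_eq_add_of_le (Nat.succ_le_succ_iff.mp hle)
  rw [gaussBinom_add_succ_eq_div hq, gaussBinom_succ_succ_eq_div hq, succ_choose_two (n + 1)]
  have hqn := one_sub_pow_succ_ne_zero hq n
  have hqN := one_sub_pow_succ_ne_zero hq (n + m)
  field_simp
  ring

/-- The Durfee square weights `(q;q)_N [N choose n] q ^ (n ^ 2) / (q;q)_n`, which sum to `1`
over `n`. -/
def durfeeWeight (q : K) (N n : ℕ) : K :=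
  gaussBinom q N n * (qPochhammer q q N * q ^ n ^ 2 / qPochhammer q q n)

/-- The WZ mate of `durfeeWeight`: its increments in `n` cancel those of `durfeeWeight` in `N`. -/
def durfeeMate (q : K) (N : ℕ) : ℕ → K
  | 0 => 0
  | n + 1 =>
    gaussBinom q N n * (q ^ (n ^ 2 + n + N + 1) * qPochhammer q q N / qPochhammer q q n)

lemma durfeeWeight_zero_right (q : K) (N : ℕ) : durfeeWeight q N 0 = qPochhammer q q N := by
  simp [durfeeWeight]

lemma durfeeWeight_succ_sub (hq : ¬IsOfFinOrder q) (N n : ℕ) :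
    durfeeWeight q (N + 1) n - durfeeWeight q N n =
      durfeeMate q N n - durfeeMate q N (n + 1) := by
  rcases n with _ | n
  · simp only [durfeeWeight_zero_right, durfeeMate, gaussBinom_zero_right, qPochhammer_self_succ,
      qPochhammer_zero]
    ring
  rcases lt_or_ge N n with hlt | hle
  · simp only [durfeeWeight, durfeeMate, gaussBinom_eq_zero_of_lt q hlt,
      gaussBinom_eq_zero_of_lt q (Nat.succ_lt_succ hlt),
      gaussBinom_eq_zero_of_lt q (Nat.lt_succ_of_lt hlt), zero_mul]
  obtain ⟨m, rfl⟩ := Nat.exists_eq_add_of_le hle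
  simp only [durfeeWeight, durfeeMate, qPochhammer_self_succ, gaussBinom_add_succ_eq_div hq,
    gaussBinom_succ_succ_eq_div hq]
  have hn := one_sub_pow_succ_ne_zero hq n
  have hpoch := qPochhammer_self_ne_zero hq n
  field_simp
  ring

lemma durfeeMate_succ_mul_div (hq : ¬IsOfFinOrder q) (N n : ℕ) :
    durfeeMate q N (n + 1) * (q ^ (n + 1) / (1 - q ^ (n + 1)) ^ 2) =
      q ^ (N + 1) / (1 - q ^ (N + 1)) ^ 2 * durfeeWeight q (N + 1) (n + 1) := by
  rw [durfeeMate, durfeeWeight, gaussBinom_succ_succ_eq_div hq, qPochhammer_self_succ,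
    qPochhammer_self_succ]
  have hn := one_sub_pow_succ_ne_zero hq n
  have hN := one_sub_pow_succ_ne_zero hq N
  have hpoch := qPochhammer_self_ne_zero hq n
  field_simp
  ring

lemma sum_durfeeWeight_succ_mul (hq : ¬IsOfFinOrder q) (f : ℕ → K) (N : ℕ) :
    ∑ n ∈ range (N + 2), durfeeWeight q (N + 1) n * f n =
      ∑ n ∈ range (N + 1), durfeeWeight q N n * f n +
        ∑ n ∈ range (N + 1), durfeeMate q N (n + 1) * (f (n + 1) - f n) := by
  have hlast : durfeeMate q N (N + 2) = 0 := by
    rw [durfeeMate, gaussBinom_eq_zero_of_lt q N.lt_succ_self, zero_mul]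
  have hextend : ∑ n ∈ range (N + 1), durfeeWeight q N n * f n =
      ∑ n ∈ range (N + 2), durfeeWeight q N n * f n := by
    simp only [durfeeWeight, mul_assoc, sum_range_gaussBinom_mul_extend]
  have htelescope : ∑ n ∈ range (N + 2),
      (durfeeMate q N n * f n - durfeeMate q N (n + 1) * f (n + 1)) = 0 := by
    rw [sum_range_sub' fun n => durfeeMate q N n * f n, hlast]
    simp [durfeeMate]
  have hmate : ∑ n ∈ range (N + 1), durfeeMate q N (n + 1) * (f (n + 1) - f n) =
      ∑ n ∈ range (N + 2), durfeeMate q N (n + 1) * (f (n + 1) - f n) := by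
    rw [sum_range_succ _ (N + 1), hlast, zero_mul, add_zero]
  rw [hextend, hmate, ← sub_eq_zero, ← htelescope, ← sum_add_distrib, ← sum_sub_distrib]
  refine sum_congr rfl fun n _ => ?_
  linear_combination f n * durfeeWeight_succ_sub hq N n

theorem sum_durfeeWeight (hq : ¬IsOfFinOrder q) (N : ℕ) :
    ∑ n ∈ range (N + 1), durfeeWeight q N n = 1 := by
  induction N with
  | zero => simp [durfeeWeight]
  | succ N ih => simpa [ih] using sum_durfeeWeight_succ_mul hq (fun _ => 1) N

/-- The partial sum `∑_{k=1}^{n} q ^ k / (1 - q ^ k) ^ 2` of the Lambert series of the divisor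
sum function `σ₁`. -/
def lambertSum (q : K) (n : ℕ) : K := ∑ k ∈ Icc 1 n, q ^ k / (1 - q ^ k) ^ 2

@[simp]
lemma lambertSum_zero (q : K) : lambertSum q 0 = 0 := by simp [lambertSum]

lemma lambertSum_succ (q : K) (n : ℕ) :
    lambertSum q (n + 1) = lambertSum q n + q ^ (n + 1) / (1 - q ^ (n + 1)) ^ 2 :=
  sum_Icc_succ_top (by lia) _

lemma sum_durfeeWeight_succ_mul_lambertSum (hq : ¬IsOfFinOrder q) (N : ℕ) :
    ∑ n ∈ range (N + 2), durfeeWeight q (N + 1) n * lambertSum q n =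
      ∑ n ∈ range (N + 1), durfeeWeight q N n * lambertSum q n +
        q ^ (N + 1) / (1 - q ^ (N + 1)) ^ 2 * (1 - qPochhammer q q (N + 1)) := by
  have htail :
      ∑ n ∈ range (N + 1), durfeeWeight q (N + 1) (n + 1) = 1 - qPochhammer q q (N + 1) := by
    rw [← sum_durfeeWeight hq (N + 1), sum_range_succ' _ (N + 1), durfeeWeight_zero_right,
      add_sub_cancel_right]
  rw [sum_durfeeWeight_succ_mul hq, ← htail, mul_sum]
  congr 1
  refine sum_congr rfl fun n _ => ?_
  rw [lambertSum_succ, add_sub_cancel_left, durfeeMate_succ_mul_div hq]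

theorem alternatingSum_add_sum_durfeeWeight_mul_lambertSum (hq : ¬IsOfFinOrder q) (N : ℕ) :
    alternatingSum q N + ∑ n ∈ range (N + 1), durfeeWeight q N n * lambertSum q n =
      lambertSum q N := by
  induction N with
  | zero => simp [alternatingSum]
  | succ N ih =>
    have hN := one_sub_pow_succ_ne_zero hq N
    rw [sum_durfeeWeight_succ_mul_lambertSum hq, alternatingSum_succ hq, lambertSum_succ, ← ih,
      qPochhammer_self_succ]
    field_simp
    ring

end Field

section NormedField

variable {K : Type*} [NormedField K] {q : K}

lemma hasSum_lambertSum (hq : ‖q‖ < 1) (N : ℕ) :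
    HasSum (fun n : ℕ =>
      ((n : K) + 1) * q ^ (n + 1) * (1 - q ^ (N * (n + 1))) / (1 - q ^ (n + 1)))
      (lambertSum q N) := by
  have hterm : ∀ k ∈ Icc 1 N, HasSum (fun n : ℕ => ((n : K) + 1) * (q ^ k) ^ (n + 1))
      (q ^ k / (1 - q ^ k) ^ 2) := fun k hk => by
    have hqk : ‖q ^ k‖ < 1 := by
      rw [norm_pow]
      exact pow_lt_one₀ (norm_nonneg q) hq (Nat.one_le_iff_ne_zero.mp (mem_Icc.mp hk).1)
    have hsum := hasSum_coe_mul_geometric_of_norm_lt_one hqk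
    rw [← hasSum_nat_add_iff' 1] at hsum
    simpa using hsum
  convert! hasSum_sum hterm using 2 with n
  have hq1 := sub_ne_zero.mp (one_sub_pow_succ_ne_zero (not_isOfFinOrder_of_norm_lt_one hq) n)
  rw [← mul_sum, sum_congr rfl fun k _ => pow_right_comm q k (n + 1),
    sum_Icc_one_pow hq1.symm, mul_comm N, pow_mul]
  ring

theorem stmt_7_general (hq : ‖q‖ < 1) (N : ℕ) :
    (1 / qPochhammer q q N) * (∑ n ∈ Icc 1 N,
        gaussBinom q N n * ((-1) ^ (n - 1) * (n : K) * q ^ (n * (n + 1) / 2) / (1 - q ^ n))) +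
      ∑ n ∈ Icc 1 N,
        gaussBinom q N n * (q ^ (n ^ 2) / qPochhammer q q n) *
          ∑ k ∈ Icc 1 n, q ^ k / (1 - q ^ k) ^ 2 =
      (1 / qPochhammer q q N) *
        ∑' n : ℕ, ((n : K) + 1) * q ^ (n + 1) * (1 - q ^ (N * (n + 1))) / (1 - q ^ (n + 1)) := by
  have hroot := not_isOfFinOrder_of_norm_lt_one hq
  have hpoch := qPochhammer_self_ne_zero hroot N
  have halternating : ∑ n ∈ Icc 1 N,
      gaussBinom q N n * ((-1) ^ (n - 1) * (n : K) * q ^ (n * (n + 1) / 2) / (1 - q ^ n)) =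
        alternatingSum q N := by
    simp only [alternatingSum, Nat.choose_two_right, Nat.add_sub_cancel, mul_comm (_ + 1)]
  have hdurfee : ∑ n ∈ Icc 1 N, gaussBinom q N n * (q ^ (n ^ 2) / qPochhammer q q n) *
      ∑ k ∈ Icc 1 n, q ^ k / (1 - q ^ k) ^ 2 =
        (1 / qPochhammer q q N) *
          ∑ n ∈ range (N + 1), durfeeWeight q N n * lambertSum q n := by
    rw [sum_range_succ_eq_sum_Icc_one (by simp), mul_sum]
    refine sum_congr rfl fun n _ => ?_
    rw [durfeeWeight, lambertSum]
    field_simp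
  rw [(hasSum_lambertSum hq N).tsum_eq, halternating, hdurfee, ← mul_add,
    alternatingSum_add_sum_durfeeWeight_mul_lambertSum hroot]

end NormedField

lemma qP_eq_qPochhammer (a q : ℂ) (n : ℕ) : qP a q n = qPochhammer a q n := rfl

lemma qBinom_eq_gaussBinom {q : ℂ} (hq : ¬IsOfFinOrder q) {N n : ℕ} (h : n ≤ N) :
    qBinom q N n = gaussBinom q N n := by
  obtain ⟨m, rfl⟩ := Nat.exists_eq_add_of_le h
  have hn := qPochhammer_self_ne_zero hq n
  have hm := qPochhammer_self_ne_zero hq m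
  simp only [qBinom, qP_eq_qPochhammer, Nat.add_sub_cancel_left]
  rw [div_eq_iff (mul_ne_zero hn hm), ← mul_assoc, gaussBinom_mul_qPochhammer_mul_qPochhammer]

lemma sum_Icc_qBinom_mul {q : ℂ} (hq : ¬IsOfFinOrder q) (f : ℕ → ℂ) (N : ℕ) :
    ∑ n ∈ Icc 1 N, qBinom q N n * f n = ∑ n ∈ Icc 1 N, gaussBinom q N n * f n :=
  sum_congr rfl fun n hn => by rw [qBinom_eq_gaussBinom hq (mem_Icc.mp hn).2]

/-- Finite analogue of Andrews' spt identity, generating-function form. -/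
theorem stmt_7 (N : ℕ) (hN : 1 ≤ N) (q : ℂ) (hq : ‖q‖ < 1) :
    (1 / qP q q N) * (∑ n ∈ Finset.Icc 1 N,
        qBinom q N n * ((-1) ^ (n - 1) * (n : ℂ) * q ^ (n * (n + 1) / 2) / (1 - q ^ n))) +
      ∑ n ∈ Finset.Icc 1 N,
        qBinom q N n * (q ^ (n ^ 2) / qP q q n) *
          ∑ k ∈ Finset.Icc 1 n, q ^ k / (1 - q ^ k) ^ 2 =
      (1 / qP q q N) *
        ∑' n : ℕ, ((n : ℂ) + 1) * q ^ (n + 1) * (1 - q ^ (N * (n + 1))) / (1 - q ^ (n + 1)) := by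
  have hroot := not_isOfFinOrder_of_norm_lt_one hq
  simpa only [mul_assoc, qP_eq_qPochhammer, sum_Icc_qBinom_mul hroot] using stmt_7_general hq N
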